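/- arXiv:1304.7694 — 3 statements merged into one kernel-verified Lean document; each statement's English description precedes it below -/
import Mathlib

section
/- Let β > 0 and let u_4 : ℝ → ℝ be the quadratic utility function u_4(t) = (β/2)t² − t for t ≤ 1/β and u_4(t) = −1/(2β) for t > 1/β. Then for every γ > 0 and every t ∈ ℝ, Prox_{γ u_4}(t) = (t + γ)/(1 + γβ) if t ≤ 1/β, and Prox_{γ u_4}(t) = t if t > 1/β. -/
/-- Proximal point of the quadratic utility `u₄`: for `γ > 0`,
`Prox_{γu₄}(t) = (t + γ)/(1 + γβ)` if `t ≤ 1/β` and `Prox_{γu₄}(t) = t` if `t > 1/β`,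
i.e. the stated point is the unique minimizer of `y ↦ γ u₄(y) + (1/2)(y − t)²`. -/
theorem statement7 (β : ℝ) (hβ : 0 < β)
    (u₄ : ℝ → ℝ)
    (hu₄ : ∀ s : ℝ, u₄ s = if s ≤ 1 / β then (β / 2) * s ^ 2 - s else -(1 / (2 * β)))
    (γ : ℝ) (hγ : 0 < γ) (t : ℝ) :
    ∀ y : ℝ, y ≠ (if t ≤ 1 / β then (t + γ) / (1 + γ * β) else t) →
      γ * u₄ (if t ≤ 1 / β then (t + γ) / (1 + γ * β) else t) +
          (1 / 2) * ((if t ≤ 1 / β then (t + γ) / (1 + γ * β) else t) - t) ^ 2 <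
        γ * u₄ y + (1 / 2) * (y - t) ^ 2 := by
  intro y hy
  obtain ⟨b, hb⟩ : ∃ b : ℝ, b = 1 / β := ⟨_, rfl⟩
  have hb1 : β * b = 1 := by rw [hb]; field_simp
  have hb2 : 1 / (2 * β) = b / 2 := by rw [hb]; field_simp
  simp only [← hb, hb2] at hu₄ hy ⊢
  by_cases ht : t ≤ b
  · simp only [ht, if_true] at hy ⊢
    have hpos : 0 < 1 + γ * β := by positivity
    obtain ⟨p, hp⟩ : ∃ p : ℝ, p = (t + γ) / (1 + γ * β) := ⟨_, rfl⟩
    have hp1 : p * (1 + γ * β) = t + γ := by rw [hp]; field_simp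
    rw [← hp] at hy ⊢
    have hpb : p ≤ b := by
      rw [hp, div_le_iff₀ hpos]
      have : b * (1 + γ * β) = b + γ * (β * b) := by ring
      rw [this, hb1]; linarith
    have hup : u₄ p = β / 2 * p ^ 2 - p := by rw [hu₄, if_pos hpb]
    have hsub : u₄ p + (β * p - 1) * (y - p) ≤ u₄ y := by
      rw [hup, hu₄ y]
      split_ifs with h
      · have : 0 ≤ β / 2 * (y - p) ^ 2 := by positivity
        linarith
      · have h1 : 0 ≤ β / 2 * (b - p) ^ 2 := by positivity
        have h2 : 0 ≤ β * ((b - p) * (y - b)) :=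
          mul_nonneg hβ.le (mul_nonneg (by linarith) (by linarith))
        have e : -(b / 2) - (β / 2 * p ^ 2 - p + (β * p - 1) * (y - p)) =
            β / 2 * (b - p) ^ 2 + β * ((b - p) * (y - b)) := by
          linear_combination (b / 2 - y) * hb1
        linarith
    have h3 := mul_le_mul_of_nonneg_left hsub hγ.le
    have h4 : 0 < (y - p) ^ 2 := by
      have := sub_ne_zero.mpr hy
      positivity
    have h5 : γ * ((β * p - 1) * (y - p)) = (t - p) * (y - p) := by
      linear_combination (y - p) * hp1
    linarith
  · simp only [ht, if_false] at hy ⊢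
    have h4 : 0 < (y - t) ^ 2 := by
      have := sub_ne_zero.mpr hy
      positivity
    have h5 : u₄ t ≤ u₄ y := by
      rw [hu₄ t, hu₄ y, if_neg ht]
      split_ifs with h
      · have h1 : 0 ≤ β / 2 * (b - y) ^ 2 := by positivity
        have e : β / 2 * y ^ 2 - y + b / 2 = β / 2 * (b - y) ^ 2 := by
          linear_combination (y - b / 2) * hb1
        linarith
      · exact le_rfl
    have h3 := mul_le_mul_of_nonneg_left h5 hγ.le
    linarith
end

section
/- Let θ > 0 and let u_5 : ℝ → ℝ ∪ {+∞} be the logarithmic utility function u_5(t) = −θ ln(1 + t/θ) for t > −θ and u_5(t) = +∞ for t ≤ −θ. Then for every γ > 0 and every t ∈ ℝ, Prox_{γ u_5}(t) = (t − θ)/2 + √( (θ − t)²/4 + θ(γ + t) ). -/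
/-- Proximal point of the logarithmic utility `u₅` (with `u₅(t) = −θ ln(1 + t/θ)` for `t > −θ`
and `u₅(t) = +∞` otherwise): for `γ > 0`,
`Prox_{γu₅}(t) = (t − θ)/2 + √((θ − t)²/4 + θ(γ + t))`, i.e. this point is the unique
minimizer of `y ↦ γ u₅(y) + (1/2)(y − t)²` (with extended-real values). -/
theorem statement8 (θ : ℝ) (hθ : 0 < θ)
    (u₅ : ℝ → EReal)
    (hu₅ : ∀ s : ℝ, u₅ s =
      if -θ < s then (((-θ) * Real.log (1 + s / θ) : ℝ) : EReal) else (⊤ : EReal))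
    (γ : ℝ) (hγ : 0 < γ) (t : ℝ) :
    ∀ y : ℝ, y ≠ (t - θ) / 2 + Real.sqrt ((θ - t) ^ 2 / 4 + θ * (γ + t)) →
      (γ : EReal) * u₅ ((t - θ) / 2 + Real.sqrt ((θ - t) ^ 2 / 4 + θ * (γ + t))) +
          (((1 / 2) * (((t - θ) / 2 + Real.sqrt ((θ - t) ^ 2 / 4 + θ * (γ + t))) - t) ^ 2 : ℝ) :
            EReal) <
        (γ : EReal) * u₅ y + (((1 / 2) * (y - t) ^ 2 : ℝ) : EReal) := by
  intro y hy
  have hD : 0 ≤ (θ - t) ^ 2 / 4 + θ * (γ + t) := by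
    nlinarith [sq_nonneg (θ + t), mul_pos hθ hγ]
  have hS := Real.sq_sqrt hD
  have hS0 := Real.sqrt_nonneg ((θ - t) ^ 2 / 4 + θ * (γ + t))
  generalize Real.sqrt ((θ - t) ^ 2 / 4 + θ * (γ + t)) = r at hy hS hS0 ⊢
  obtain ⟨p, hp⟩ : ∃ p, p = (t - θ) / 2 + r := ⟨_, rfl⟩
  rw [← hp] at hy ⊢
  have hpp : 0 < θ + p := by
    by_contra hneg
    have h1 : 0 ≤ -((t + θ) / 2) - r := by linarith
    nlinarith [mul_pos hθ hγ]
  have hopt : (p - t) * (θ + p) = γ * θ := by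
    rw [hp]; nlinarith
  rw [hu₅ p, hu₅ y, if_pos (by linarith)]
  by_cases hyθ : -θ < y
  · rw [if_pos hyθ]
    have hyp : 0 < θ + y := by linarith
    norm_cast
    have e1 : 1 + y / θ = (1 + p / θ) * ((θ + y) / (θ + p)) := by
      field_simp
    have hpos : 0 < 1 + p / θ := by
      have : 1 + p / θ = (θ + p) / θ := by field_simp
      rw [this]; positivity
    have hr : 0 < (θ + y) / (θ + p) := by positivity
    rw [e1, Real.log_mul hpos.ne' hr.ne']
    have hl := Real.log_le_sub_one_of_pos hr
    have hm := mul_le_mul_of_nonneg_left hl (mul_pos hγ hθ).le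
    have e2 : γ * θ * ((θ + y) / (θ + p) - 1) = (p - t) * (y - p) := by
      rw [← hopt]; field_simp; ring
    rw [e2] at hm
    have hsq : 0 < (y - p) ^ 2 := by
      have := sub_ne_zero.mpr hy
      positivity
    nlinarith
  · rw [if_neg hyθ, EReal.coe_mul_top_of_pos hγ, EReal.top_add_coe]
    norm_cast
    exact EReal.coe_lt_top _
end

section
/- Let n ≥ 1, let p = (p_1,…,p_n) be a probability vector (p_i ≥ 0 for all i and Σ_{i=1}^n p_i = 1), let α ∈ (0,1), and let X ∈ ℝⁿ be a random variable on the finite probability space with P({i}) = p_i. Then the Conditional Value-at-Risk at level α admits the dual representation CVaR_α(X) := inf_{λ∈ℝ} { λ + (1/(1−α)) Σ_{i=1}^n p_i [X_i + λ]_− } = sup_{q ∈ Q} ( −qᵀX ), where Q = { q ∈ ℝⁿ : Σ_{i=1}^n q_i = 1 and 0 ≤ q_i ≤ p_i/(1−α) for i = 1,…,n }. -/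
/-- Existence of a weighted quantile. -/
theorem quantile_exists (n : ℕ) (hn : 1 ≤ n) (w Y : Fin n → ℝ) (hW : 1 ≤ ∑ i, w i) :
    ∃ t : ℝ, (∑ i, (if t < Y i then w i else 0)) ≤ 1 ∧
      1 ≤ ∑ i, (if t ≤ Y i then w i else 0) := by
  classical
  have : Nonempty (Fin n) := ⟨⟨0, hn⟩⟩
  let S : Finset (Fin n) := Finset.univ.filter
    (fun k => 1 ≤ ∑ i, (if Y k ≤ Y i then w i else 0))
  have hS : S.Nonempty := by
    obtain ⟨k, hk⟩ := Finite.exists_min Y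
    refine ⟨k, ?_⟩
    simp only [S, Finset.mem_filter, Finset.mem_univ, true_and]
    simpa [hk] using hW
  obtain ⟨k, hkS, hk⟩ := S.exists_max_image Y hS
  refine ⟨Y k, ?_, by simpa [S] using hkS⟩
  by_contra! hcon
  have hT : (Finset.univ.filter (fun i => Y k < Y i)).Nonempty := by
    by_contra hne
    rw [Finset.not_nonempty_iff_eq_empty] at hne
    rw [← Finset.sum_filter, hne] at hcon
    simp at hcon
    linarith
  obtain ⟨m, hm, hmin⟩ := Finset.exists_min_image _ Y hT
  simp only [Finset.mem_filter, Finset.mem_univ, true_and] at hm hmin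
  have hmS : m ∈ S := by
    simp only [S, Finset.mem_filter, Finset.mem_univ, true_and]
    refine hcon.le.trans (le_of_eq (Finset.sum_congr rfl fun i _ => ?_))
    have : Y k < Y i ↔ Y m ≤ Y i := ⟨hmin i, fun h => hm.trans_le h⟩
    simp only [this]
  exact absurd (hk m hmS) (not_le.mpr hm)

/-- Dual representation of the Conditional Value-at-Risk on a finite probability space:
`CVaR_α(X) = inf_{λ∈ℝ} { λ + (1/(1−α)) ∑ᵢ pᵢ [Xᵢ + λ]₋ } = sup_{q ∈ Q} (−qᵀX)`, where
`Q = { q : ∑ᵢ qᵢ = 1, 0 ≤ qᵢ ≤ pᵢ/(1−α) }`. -/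
theorem statement14 (n : ℕ) (hn : 1 ≤ n) (p : Fin n → ℝ) (hp : ∀ i, 0 ≤ p i)
    (hsum : ∑ i, p i = 1) (α : ℝ) (hα : 0 < α) (hα' : α < 1) (X : Fin n → ℝ) :
    (⨅ lam : ℝ,
        ((lam + (1 / (1 - α)) * ∑ i, p i * max (-(X i + lam)) 0 : ℝ) : EReal)) =
      ⨆ q ∈ {q : Fin n → ℝ | (∑ i, q i = 1) ∧ ∀ i, 0 ≤ q i ∧ q i ≤ p i / (1 - α)},
        ((-(∑ i, q i * X i) : ℝ) : EReal) := by
  have h1 : 0 < 1 - α := by linarith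
  have hobj : ∀ lam : ℝ, lam + (1 / (1 - α)) * ∑ i, p i * max (-(X i + lam)) 0
      = lam + ∑ i, p i / (1 - α) * max (-(X i + lam)) 0 := by
    intro lam
    rw [Finset.mul_sum]
    congr 1
    exact Finset.sum_congr rfl fun i _ => by ring
  have hq : ∀ (q : Fin n → ℝ) (lam : ℝ), ∑ i, q i = 1 →
      -(∑ i, q i * X i) = lam + ∑ i, q i * (-(X i + lam)) := by
    intro q lam h
    have : ∑ i, q i * (-(X i + lam)) = -(∑ i, q i * X i) - (∑ i, q i) * lam := by
      rw [Finset.sum_mul, ← Finset.sum_neg_distrib, ← Finset.sum_sub_distrib]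
      exact Finset.sum_congr rfl fun i _ => by ring
    rw [this, h]; ring
  apply le_antisymm
  · have hw : ∀ i, 0 ≤ p i / (1 - α) := fun i => div_nonneg (hp i) h1.le
    obtain ⟨t, hA, hAB⟩ := quantile_exists n hn (fun i => p i / (1 - α)) (fun i => - X i) (by
      rw [← Finset.sum_div, hsum, le_div_iff₀ h1]; linarith)
    generalize hw' : (fun i => p i / (1 - α)) = w at *
    have hwi : ∀ i, p i / (1 - α) = w i := fun i => congrFun hw' i
    simp only [hwi] at *
    have hsplit : ∑ i, (if t ≤ -X i then w i else 0) =
        ∑ i, (if t < -X i then w i else 0) + ∑ i, (if t = -X i then w i else 0) := by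
      rw [← Finset.sum_add_distrib]
      refine Finset.sum_congr rfl fun i _ => ?_
      rcases lt_trichotomy t (-X i) with h | h | h
      · simp [h, h.le, h.ne]
      · simp [← h]
      · simp [h.not_ge, h.not_gt, h.ne']
    obtain ⟨θ, hθ0, hθ1, hθ⟩ : ∃ θ : ℝ, 0 ≤ θ ∧ θ ≤ 1 ∧
        ∑ i, (if t < -X i then w i else 0) + θ * ∑ i, (if t = -X i then w i else 0) = 1 := by
      rw [hsplit] at hAB
      generalize ∑ i, (if t < -X i then w i else 0) = A at *
      generalize ∑ i, (if t = -X i then w i else 0) = B at *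
      rcases eq_or_ne B 0 with hB | hB
      · exact ⟨0, le_rfl, zero_le_one, by linarith⟩
      · have hB' : 0 < B := lt_of_le_of_ne (by linarith) hB.symm
        refine ⟨(1 - A) / B, div_nonneg (by linarith) hB'.le, ?_, ?_⟩
        · rw [div_le_one hB']; linarith
        · rw [div_mul_cancel₀ _ hB]; ring
    let q : Fin n → ℝ := fun i =>
      (if t < -X i then w i else 0) + θ * (if t = -X i then w i else 0)
    have hq1 : ∑ i, q i = 1 := by
      simp only [q]
      rw [Finset.sum_add_distrib, ← Finset.mul_sum]; exact hθ
    refine (iInf_le _ t).trans ?_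
    refine le_trans ?_ (le_iSup₂ (f := fun (q : Fin n → ℝ) (_ : q ∈ {q : Fin n → ℝ |
      (∑ i, q i = 1) ∧ ∀ i, 0 ≤ q i ∧ q i ≤ w i}) =>
        ((-(∑ i, q i * X i) : ℝ) : EReal)) q ⟨hq1, fun i => ?_⟩)
    · rw [EReal.coe_le_coe_iff, hobj, hq q t hq1]
      refine le_of_eq ?_
      congr 1
      refine Finset.sum_congr rfl fun i _ => ?_
      simp only [q]
      rcases lt_trichotomy t (-X i) with h | h | h
      · rw [max_eq_left (by linarith)]; simp [h, h.ne]
      · have : X i + t = 0 := by linarith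
        simp [this]
      · rw [max_eq_right (by linarith)]; simp [h.not_gt, h.ne']
    · have := hw i
      simp only [q]
      rcases lt_trichotomy t (-X i) with h | h | h
      · simp [h, h.ne, this]
      · simp only [← h, lt_irrefl, if_true, if_false, zero_add]
        exact ⟨mul_nonneg hθ0 this, mul_le_of_le_one_left this hθ1⟩
      · simp [h.not_gt, h.ne', this]
  · refine iSup₂_le fun q hqQ => le_iInf fun lam => ?_
    rw [EReal.coe_le_coe_iff, hobj, hq q lam hqQ.1]
    refine add_le_add le_rfl (Finset.sum_le_sum fun i _ => ?_)
    have h := hqQ.2 i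
    calc q i * (-(X i + lam)) ≤ q i * max (-(X i + lam)) 0 :=
          mul_le_mul_of_nonneg_left (le_max_left _ _) h.1
      _ ≤ _ := mul_le_mul_of_nonneg_right h.2 (le_max_right _ _)
end
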